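/- A Skolem sequence of order n exists if and only if n ≡ 0 or 3 (mod 4). -/

import Mathlib

/-- A Skolem sequence of order `n`: a permutation of the multiset
`{1,1,2,2,...,n,n}` (indexed by `0 ≤ i < 2n`) satisfying the Skolem property. -/
def IsSkolem (n : ℕ) (ζ : ℕ → ℕ) : Prop :=
  (↑((List.range (2 * n)).map ζ) : Multiset ℕ) =
      (Finset.Icc 1 n).val + (Finset.Icc 1 n).val ∧
  ∀ i j, i < j → j < 2 * n → ζ i = ζ j → j - i = ζ i + 1

/-- An extended Skolem sequence of order `n`: a permutation of the multiset
`{0,0,1,1,...,n,n}` (indexed by `0 ≤ i < 2(n+1)`) satisfying the Skolem property. -/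
def IsESS (n : ℕ) (ζ : ℕ → ℕ) : Prop :=
  (↑((List.range (2 * (n + 1))).map ζ) : Multiset ℕ) =
      (Finset.Icc 0 n).val + (Finset.Icc 0 n).val ∧
  ∀ i j, i < j → j < 2 * (n + 1) → ζ i = ζ j → j - i = ζ i + 1

/-- Cyclic shift of a length-`L` sequence by an integer amount `a`. -/
def shiftZ (u : ℕ → ℕ) (L : ℕ) (a : ℤ) : ℕ → ℕ :=
  fun t => u ((((t : ℤ) + a) % (L : ℤ)).toNat)

/-- The set of delivery channels between two length-`L` sequences. -/
def deliveryChannels (L : ℕ) (v w : ℕ → ℕ) : Set ℕ :=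
  {h | ∃ t < L, v t = h ∧ w t = h}

/-- The set of delivery slots between two length-`L` sequences. -/
def deliverySlots (L : ℕ) (v w : ℕ → ℕ) : Finset ℕ :=
  (Finset.range L).filter (fun t => v t = w t)

/-!
Listing the positions of each label, a Skolem sequence of order `n` is a partition of
`{0, ..., 2n - 1}` into pairs `{p k, p k + k + 1}` with `1 ≤ k ≤ n`.

Necessity is a parity count. The positions add up to `n` modulo `2`, while each pair adds up to
`k + 1` modulo `2`; hence `1 + 2 + ... + n` is even.

For sufficiency, the labels `1, ..., 4m + 3` other than `2m + 1` can be placed in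
`{0, ..., 8m + 5}` so that exactly the positions `4m + 2` and `6m + 4` stay free. These are
`2m + 2` apart, so the label `2m + 1` fills them and yields order `4m + 3`. For order `4m + 4`, two
positions are appended instead: `2m + 1` goes to `6m + 4` and `8m + 6`, and `4m + 4` goes to
`4m + 2` and `8m + 7`.
-/

open Finset

/-- The two positions occupied by the label `k` when it first occurs at position `p`. -/
def slots (p k : ℕ) : Finset ℕ := {p, p + k + 1}

theorem mem_slots {p k t : ℕ} : t ∈ slots p k ↔ t = p ∨ t = p + k + 1 := by
  simp [slots]

theorem slots_subset_range {p k N : ℕ} (h : p + k + 1 < N) : slots p k ⊆ range N := by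
  intro t ht
  rw [mem_slots] at ht
  rw [mem_range]
  omega

theorem card_slots (p k : ℕ) : #(slots p k) = 2 :=
  card_pair (by omega)

theorem sum_slots (p k : ℕ) : ∑ t ∈ slots p k, t = 2 * p + (k + 1) := by
  rw [slots, sum_pair (by omega)]
  ring

/-- A placement of the labels in `K` on the positions in `S`: the pairs of slots of the labels
partition `S`, where `p k` is the first position of the label `k`. The values of `p` outside `K`
are irrelevant. For `S = {0, ..., 2n - 1}` and `K = {1, ..., n}` this encodes a Skolem sequence of
order `n`, and other choices of `S` and `K` allow it to be built in stages. -/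
structure IsPlacement (S K : Finset ℕ) (p : ℕ → ℕ) : Prop where
  pairwiseDisjoint : (K : Set ℕ).PairwiseDisjoint fun k ↦ slots (p k) k
  biUnion_slots : K.biUnion (fun k ↦ slots (p k) k) = S

namespace IsPlacement

variable {S K : Finset ℕ} {p : ℕ → ℕ}

theorem of_subset_of_card_le (hdisj : (K : Set ℕ).PairwiseDisjoint fun k ↦ slots (p k) k)
    (hsub : ∀ k ∈ K, slots (p k) k ⊆ S) (hcard : #S ≤ 2 * #K) : IsPlacement S K p where
  pairwiseDisjoint := hdisj
  biUnion_slots := by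
    refine eq_of_subset_of_card_le (biUnion_subset.2 hsub) ?_
    simpa [card_biUnion hdisj, card_slots, mul_comm] using hcard

protected theorem insert (h : IsPlacement S K p) {k q : ℕ} (hk : k ∉ K)
    (hS : Disjoint (slots q k) S) :
    IsPlacement (slots q k ∪ S) (insert k K) (Function.update p k q) := by
  have hp : ∀ l ∈ K, Function.update p k q l = p l := fun l hl ↦
    Function.update_of_ne (ne_of_mem_of_not_mem hl hk) q p
  have hslots : ∀ l ∈ K, slots (Function.update p k q l) l = slots (p l) l := fun l hl ↦ by
    rw [hp l hl]
  refine ⟨?_, ?_⟩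
  · rw [coe_insert, Set.pairwiseDisjoint_insert_of_notMem (by simpa using hk)]
    refine ⟨fun l hl l' hl' hne ↦ ?_, fun l hl ↦ ?_⟩
    · simpa only [Function.onFun, hp l hl, hp l' hl'] using h.pairwiseDisjoint hl hl' hne
    · rw [Function.update_self, hp l hl]
      have hsub : slots (p l) l ⊆ S :=
        h.biUnion_slots ▸ subset_biUnion_of_mem (fun k ↦ slots (p k) k) hl
      exact hS.mono_right hsub
  · rw [biUnion_insert, Function.update_self, biUnion_congr rfl hslots, h.biUnion_slots]

theorem sum_modEq (h : IsPlacement S K p) : ∑ t ∈ S, t ≡ ∑ k ∈ K, (k + 1) [MOD 2] := by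
  have hsum : ∑ t ∈ S, t = 2 * ∑ k ∈ K, p k + ∑ k ∈ K, (k + 1) := by
    simp only [← h.biUnion_slots, sum_biUnion h.pairwiseDisjoint, sum_slots, sum_add_distrib,
      mul_sum]
  rw [hsum]
  exact Nat.mul_add_mod _ _ _

theorem exists_filter_eq_slots (h : IsPlacement S K p) :
    ∃ ζ : ℕ → ℕ, (∀ t ∈ S, ζ t ∈ K) ∧ ∀ k ∈ K, {t ∈ S | ζ t = k} = slots (p k) k := by
  have hlabel : ∀ t ∈ S, ∃ k ∈ K, t ∈ slots (p k) k := fun t ht ↦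
    mem_biUnion.1 (h.biUnion_slots.symm ▸ ht)
  choose! ζ hζK hζ using hlabel
  refine ⟨ζ, hζK, fun k hk ↦ Subset.antisymm (fun t ht ↦ ?_) fun t ht ↦ ?_⟩
  · obtain ⟨htS, rfl⟩ := mem_filter.1 ht
    exact hζ t htS
  · have htS : t ∈ S := h.biUnion_slots ▸ mem_biUnion.2 ⟨k, hk, ht⟩
    exact mem_filter.2
      ⟨htS, h.pairwiseDisjoint.elim_finset (hζK t htS) hk t (hζ t htS) ht⟩

end IsPlacement

theorem coe_map_range_eq_add_self_iff {N : ℕ} {α : Type*} [DecidableEq α] {ζ : ℕ → α}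
    {K : Finset α} : (((List.range N).map ζ : List α) : Multiset α) = K.val + K.val ↔
      ∀ k, #{t ∈ range N | ζ t = k} = if k ∈ K then 2 else 0 := by
  have hcount : ∀ k, (((List.range N).map ζ : List α) : Multiset α).count k =
      #{t ∈ range N | ζ t = k} := fun k ↦ by
    change ((range N).val.map ζ).count k = _
    simp only [Multiset.count_map, card_def, filter_val, eq_comm]
  have hcount_double : ∀ k, (K.val + K.val).count k = if k ∈ K then 2 else 0 := fun k ↦ by
    simp only [Multiset.count_add, Multiset.count_eq_of_nodup K.nodup, mem_val]
    split_ifs <;> rfl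
  simp only [Multiset.ext, hcount, hcount_double]

namespace IsSkolem

variable {n : ℕ} {ζ : ℕ → ℕ}

theorem apply_mem_Icc (h : IsSkolem n ζ) {t : ℕ} (ht : t ∈ range (2 * n)) : ζ t ∈ Icc 1 n := by
  by_contra hmem
  have hcard := coe_map_range_eq_add_self_iff.1 h.1 (ζ t)
  rw [if_neg hmem, card_eq_zero, filter_eq_empty_iff] at hcard
  exact hcard ht rfl

theorem exists_filter_eq_slots (h : IsSkolem n ζ) {k : ℕ} (hk : k ∈ Icc 1 n) :
    ∃ p, {t ∈ range (2 * n) | ζ t = k} = slots p k := by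
  have hcard : #{t ∈ range (2 * n) | ζ t = k} = 2 := by
    rw [coe_map_range_eq_add_self_iff.1 h.1, if_pos hk]
  obtain ⟨i, j, hne, hpair⟩ := card_eq_two.1 hcard
  wlog hij : i < j generalizing i j
  · exact this j i hne.symm (by rw [hpair, pair_comm]) (by omega)
  have hi : i ∈ ({t ∈ range (2 * n) | ζ t = k} : Finset ℕ) := by simp [hpair]
  have hj : j ∈ ({t ∈ range (2 * n) | ζ t = k} : Finset ℕ) := by simp [hpair]
  rw [mem_filter, mem_range] at hi hj
  have hgap := h.2 i j hij hj.1 (hi.2.trans hj.2.symm)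
  exact ⟨i, by rw [hpair, slots, show j = i + k + 1 by omega]⟩

theorem exists_isPlacement (h : IsSkolem n ζ) :
    ∃ p, IsPlacement (range (2 * n)) (Icc 1 n) p := by
  choose! p hp using fun k ↦ h.exists_filter_eq_slots (k := k)
  refine ⟨p, fun k hk l hl hne ↦ ?_, ?_⟩
  · rw [Function.onFun, ← hp k hk, ← hp l hl, disjoint_filter]
    exact fun t _ htk htl ↦ hne (htk.symm.trans htl)
  · rw [← biUnion_congr rfl hp]
    exact biUnion_filter_eq_of_maps_to fun t ↦ h.apply_mem_Icc

end IsSkolem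

theorem IsPlacement.exists_isSkolem {n : ℕ} {p : ℕ → ℕ}
    (h : IsPlacement (range (2 * n)) (Icc 1 n) p) : ∃ ζ, IsSkolem n ζ := by
  obtain ⟨ζ, hζK, hζ⟩ := h.exists_filter_eq_slots
  refine ⟨ζ, coe_map_range_eq_add_self_iff.2 fun k ↦ ?_, fun i j hij hj heq ↦ ?_⟩
  · split_ifs with hk
    · rw [hζ k hk, card_slots]
    · rw [card_eq_zero, filter_eq_empty_iff]
      rintro t ht rfl
      exact hk (hζK t ht)
  · have hi : i ∈ range (2 * n) := mem_range.2 (hij.trans hj)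
    have hi_slots : i ∈ slots (p (ζ i)) (ζ i) := hζ _ (hζK i hi) ▸ mem_filter.2 ⟨hi, rfl⟩
    have hj_slots : j ∈ slots (p (ζ i)) (ζ i) :=
      hζ _ (hζK i hi) ▸ mem_filter.2 ⟨mem_range.2 hj, heq.symm⟩
    rw [mem_slots] at hi_slots hj_slots
    omega

theorem exists_isSkolem_iff_exists_isPlacement {n : ℕ} :
    (∃ ζ, IsSkolem n ζ) ↔ ∃ p, IsPlacement (range (2 * n)) (Icc 1 n) p :=
  ⟨fun ⟨_, h⟩ ↦ h.exists_isPlacement, fun ⟨_, h⟩ ↦ h.exists_isSkolem⟩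

theorem sum_range_two_mul_modEq (n : ℕ) : ∑ t ∈ range (2 * n), t ≡ n [MOD 2] := by
  induction n with
  | zero => rfl
  | succ n ih =>
    rw [Nat.ModEq] at ih ⊢
    rw [mul_add_one, sum_range_succ, sum_range_succ]
    omega

theorem even_sum_Icc_id_iff (n : ℕ) : Even (∑ k ∈ Icc 1 n, k) ↔ n % 4 = 0 ∨ n % 4 = 3 := by
  induction n with
  | zero => simp
  | succ n ih =>
    rw [sum_Icc_succ_top (by omega), Nat.even_add, ih, Nat.even_iff]
    omega

theorem IsPlacement.even_sum_Icc {n : ℕ} {p : ℕ → ℕ}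
    (h : IsPlacement (range (2 * n)) (Icc 1 n) p) : Even (∑ k ∈ Icc 1 n, k) := by
  have hsum : n ≡ ∑ k ∈ Icc 1 n, k + n [MOD 2] := by
    simpa [sum_add_distrib] using (sum_range_two_mul_modEq n).symm.trans h.sum_modEq
  rw [Nat.even_iff]
  rw [Nat.ModEq] at hsum
  omega

/-- The first positions in the arrangement of the labels `1, ..., 4m + 3` other than `2m + 1` that
leaves `4m + 2` and `6m + 4` free. Apart from `4m + 2` and `4m + 3`, the small even and the large
odd labels form two nests of pairs centred at `6m + 7/2` and `6m + 4`, and the large even and the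
small odd ones form two nests centred at `2m + 1/2` and `2m`. -/
def holedStart (m k : ℕ) : ℕ :=
  if k = 4 * m + 2 then 2 * m
  else if k = 4 * m + 3 then 3 * m + 1
  else if Even k ↔ k ≤ 2 * m then 6 * m + 3 - k / 2
  else 2 * m - (k + 1) / 2

theorem disjoint_slots_holedStart {m k l : ℕ} (hk : k ∈ (Icc 1 (4 * m + 3)).erase (2 * m + 1))
    (hl : l ∈ (Icc 1 (4 * m + 3)).erase (2 * m + 1)) (hkl : k ≠ l) :
    Disjoint (slots (holedStart m k) k) (slots (holedStart m l) l) := by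
  simp only [mem_erase, mem_Icc] at hk hl
  simp only [disjoint_left, mem_slots, holedStart, Nat.even_iff]
  split_ifs <;> omega

theorem slots_holedStart_subset {m k : ℕ} (hk : k ∈ (Icc 1 (4 * m + 3)).erase (2 * m + 1)) :
    slots (holedStart m k) k ⊆ range (8 * m + 6) \ slots (4 * m + 2) (2 * m + 1) := by
  intro t ht
  simp only [mem_erase, mem_Icc] at hk
  simp only [mem_slots, holedStart, Nat.even_iff] at ht
  simp only [mem_sdiff, mem_range, mem_slots]
  split_ifs at ht <;> omega

theorem isPlacement_holedStart (m : ℕ) :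
    IsPlacement (range (8 * m + 6) \ slots (4 * m + 2) (2 * m + 1))
      ((Icc 1 (4 * m + 3)).erase (2 * m + 1)) (holedStart m) := by
  refine .of_subset_of_card_le (fun k hk l hl ↦ disjoint_slots_holedStart hk hl)
    (fun k ↦ slots_holedStart_subset) ?_
  rw [card_sdiff_of_subset (slots_subset_range (by omega)), card_slots,
    card_erase_of_mem (mem_Icc.2 (by omega)), card_range, Nat.card_Icc]
  omega

theorem exists_isPlacement_four_mul_add_three (m : ℕ) :
    ∃ p, IsPlacement (range (2 * (4 * m + 3))) (Icc 1 (4 * m + 3)) p := by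
  have h := (isPlacement_holedStart m).insert (notMem_erase _ _) disjoint_sdiff
  rw [union_sdiff_of_subset (slots_subset_range (by omega)),
    insert_erase (mem_Icc.2 (by omega))] at h
  rw [show 2 * (4 * m + 3) = 8 * m + 6 by ring]
  exact ⟨_, h⟩

theorem exists_isPlacement_four_mul_add_four (m : ℕ) :
    ∃ p, IsPlacement (range (2 * (4 * m + 4))) (Icc 1 (4 * m + 4)) p := by
  have hdisj : Disjoint (slots (6 * m + 4) (2 * m + 1))
      (range (8 * m + 6) \ slots (4 * m + 2) (2 * m + 1)) := by
    simp only [disjoint_left, mem_sdiff, mem_range, mem_slots]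
    omega
  have hdisj_top : Disjoint (slots (4 * m + 2) (4 * m + 4)) (slots (6 * m + 4) (2 * m + 1) ∪
      range (8 * m + 6) \ slots (4 * m + 2) (2 * m + 1)) := by
    simp only [disjoint_left, mem_union, mem_sdiff, mem_range, mem_slots]
    omega
  have hpositions : slots (4 * m + 2) (4 * m + 4) ∪ (slots (6 * m + 4) (2 * m + 1) ∪
      range (8 * m + 6) \ slots (4 * m + 2) (2 * m + 1)) = range (2 * (4 * m + 4)) := by
    ext t
    simp only [mem_union, mem_sdiff, mem_range, mem_slots]
    omega
  have hlabels : insert (4 * m + 4) (Icc 1 (4 * m + 3)) = Icc 1 (4 * m + 4) :=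
    insert_Icc_right_eq_Icc_add_one (by omega)
  have h := (isPlacement_holedStart m).insert (notMem_erase _ _) hdisj
  rw [insert_erase (mem_Icc.2 (by omega))] at h
  have h' := h.insert (k := 4 * m + 4) (by simp) hdisj_top
  rw [hpositions, hlabels] at h'
  exact ⟨_, h'⟩

/-- A Skolem sequence of order n exists iff n ≡ 0 or 3 (mod 4). -/
theorem skolem_exists_iff (n : ℕ) :
    (∃ ζ : ℕ → ℕ, IsSkolem n ζ) ↔ (n % 4 = 0 ∨ n % 4 = 3) := by
  rw [exists_isSkolem_iff_exists_isPlacement]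
  constructor
  · rintro ⟨p, hp⟩
    exact (even_sum_Icc_id_iff n).1 hp.even_sum_Icc
  · rintro (h | h)
    · rcases Nat.eq_zero_or_pos n with rfl | hn
      · exact ⟨id, by simp, by simp⟩
      · obtain ⟨m, rfl⟩ : ∃ m, n = 4 * m + 4 := ⟨n / 4 - 1, by omega⟩
        exact exists_isPlacement_four_mul_add_four m
    · obtain ⟨m, rfl⟩ : ∃ m, n = 4 * m + 3 := ⟨n / 4, by omega⟩
      exact exists_isPlacement_four_mul_add_three m
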